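/- arXiv:1310.0793 — 2 statements merged into one kernel-verified Lean document; each statement's English description precedes it below -/
import Mathlib

section
/- Let p be a prime and r ≥ 1 a natural number. Let A, B : ℕ → ℕ be sequences such that: (i) A(r−1) + B(r−1) = 2p^{r−1}; (ii) for every s with 1 ≤ s ≤ r−1, the value B(s) is in the arithmetic block of 2p^s, meaning there exists a natural number a with either (a even and B(s) = p·a) or (a odd and B(s) = p·a + (p−2)); and (iii) for every s with 1 ≤ s ≤ r−1 there exists a natural number i with i ≤ A(s), A(s−1) + i = A(s), and B(s−1) = ⌊B(s)/p⌋ + i. Then for every s ≤ r−1 one has A(s) + B(s) ≥ 2p^s. -/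
/-! The amount `i` moved from `A` to `B` in one step of the recursion does not affect the total:
`A (s-1) + B (s-1) = A s + ⌊B s / p⌋ = ⌊(p * A s + B s) / p⌋`. Hence a bound `2p^s ≤ A s + B s`
gives `2p^s ≤ p * A s + B s`, and dividing by `p` yields the bound at level `s - 1`. -/

/-- Combinatorial content of the proof of Theorem 3.2: along Parker's recursion
the total `A s + B s` never drops below `2p^s`. -/
theorem recursion_degree_lower_bound (p : ℕ) (hp : p.Prime) (r : ℕ) (hr : 1 ≤ r)
    (A B : ℕ → ℕ)
    (h1 : A (r - 1) + B (r - 1) = 2 * p ^ (r - 1))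
    (h2 : ∀ s, 1 ≤ s → s ≤ r - 1 →
      ∃ a : ℕ, (Even a ∧ B s = p * a) ∨ (Odd a ∧ B s = p * a + (p - 2)))
    (h3 : ∀ s, 1 ≤ s → s ≤ r - 1 →
      ∃ i : ℕ, i ≤ A s ∧ A (s - 1) + i = A s ∧ B (s - 1) = B s / p + i) :
    ∀ s ≤ r - 1, 2 * p ^ s ≤ A s + B s := by
  intro s hs
  -- Downward induction: the base case is the equality `h1` at level `r - 1`.
  induction hs using Nat.decreasingInduction with
  | self => exact h1.ge
  | of_succ k hk ih =>
    obtain ⟨i, -, hA, hB⟩ := h3 (k + 1) (by omega) (by omega)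
    simp only [Nat.add_sub_cancel] at hA hB
    have total : A k + B k = (p * A (k + 1) + B (k + 1)) / p := by
      rw [Nat.mul_add_div hp.pos]
      omega
    rw [total, Nat.le_div_iff_mul_le hp.pos]
    calc 2 * p ^ k * p = 2 * p ^ (k + 1) := by ring
      _ ≤ A (k + 1) + B (k + 1) := ih
      _ ≤ p * A (k + 1) + B (k + 1) :=
        Nat.add_le_add_right (Nat.le_mul_of_pos_left _ hp.pos) _
end

section
/- Let p be a prime and r ≥ 1 a natural number. Let A, B : ℕ → ℕ be sequences such that: (i) A(r−1) + B(r−1) = 2p^{r−1}; (ii) for every s with 1 ≤ s ≤ r−1, the value B(s) is in the arithmetic block of 2p^s, meaning there exists a natural number a with either (a even and B(s) = p·a) or (a odd and B(s) = p·a + (p−2)); (iii) for every s with 1 ≤ s ≤ r−1 there exists a natural number i with i ≤ A(s), A(s−1) + i = A(s), and B(s−1) = ⌊B(s)/p⌋ + i; and (iv) A(0) = 0 and B(0) = 2. Then for every s ≤ r−1 one has A(s) = 0 and B(s) = 2p^s. In particular, such a chain of data is unique: the only sequence of pairs (A(s), B(s)), s = 0, …, r−1, satisfying (i)–(iv) is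 (0, 2p^s). -/
/-!
Read the recursion upwards from `(A 0, B 0) = (0, 2)`. The block condition says that
`B s` is `p * a` or `p * a + (p - 2)` with `a = B s / p = B (s - 1) - i`, the second form only
for `a` odd. As long as `i = 0`, the quotient `a = 2p^(s-1)` is even, so the chain stays at
`(0, 2p^s)`. As soon as some `i` is positive, `A` becomes positive and `A + B` drops strictly
below `2p^s`, because lowering `a` by `i` costs `p * i`, more than the gain `i + (p - 2)`.
This strict deficit persists (`chain_step`). Hence the equality `A + B = 2p^(r-1)` at the top
forces `A (r - 1) = 0`, and monotonicity of `A` forces `A s = 0` for all smaller `s`.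
-/

/-- One upward step of the dichotomy "on the chain `(0, 2q)`" or "`A > 0` with a strict deficit",
where `q = p^(s-1)`, `(A', a + i)` is the pair at level `s - 1` and `(A' + i, b)` the pair at
level `s`. -/
lemma chain_step {p q A' a i b : ℕ} (hp : 2 ≤ p)
    (hb : (Even a ∧ b = p * a) ∨ (Odd a ∧ b = p * a + (p - 2)))
    (h : (A' = 0 ∧ a + i = 2 * q) ∨ (0 < A' ∧ A' + (a + i) < 2 * q)) :
    (A' + i = 0 ∧ b = 2 * (q * p)) ∨ (0 < A' + i ∧ A' + i + b < 2 * (q * p)) := by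
  have hb' : b ≤ p * a + (p - 2) := by rcases hb with ⟨_, h⟩ | ⟨_, h⟩ <;> omega
  obtain ⟨k, rfl⟩ := Nat.exists_eq_add_of_le hp
  have hk : 2 + k - 2 = k := by omega
  rw [hk] at hb hb'
  rcases h with ⟨rfl, h⟩ | ⟨hA, h⟩
  · rcases Nat.eq_zero_or_pos i with rfl | hi
    · left
      rcases hb with ⟨_, hb⟩ | ⟨ho, _⟩
      · refine ⟨rfl, ?_⟩
        rw [hb, show a = 2 * q by omega]
        ring
      · -- `a = 2 * q` cannot be odd
        obtain ⟨m, hm⟩ := ho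
        omega
    · right
      refine ⟨by omega, ?_⟩
      have : 2 * (q * (2 + k)) = (2 + k) * (a + i) := by rw [h]; ring
      rw [this]
      nlinarith [Nat.mul_le_mul_left k hi]
  · right
    refine ⟨by omega, ?_⟩
    have := Nat.mul_le_mul_left (2 + k) (Nat.succ_le_of_lt h)
    have : (2 + k) * (A' + (a + i) + 1) ≤ 2 * (q * (2 + k)) := by
      calc _ ≤ _ := this
        _ = _ := by ring
    nlinarith [Nat.zero_le (k * A'), Nat.zero_le (k * i)]

/-- Combinatorial core of the proof of Theorem 3.2: a chain of data in Parker's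
recursion terminating at `Hom(Δ(2), ∇(2))` is unique, namely `(A s, B s) = (0, 2p^s)`. -/
theorem recursion_chain_unique (p : ℕ) (hp : p.Prime) (r : ℕ) (hr : 1 ≤ r)
    (A B : ℕ → ℕ)
    (h1 : A (r - 1) + B (r - 1) = 2 * p ^ (r - 1))
    (h2 : ∀ s, 1 ≤ s → s ≤ r - 1 →
      ∃ a : ℕ, (Even a ∧ B s = p * a) ∨ (Odd a ∧ B s = p * a + (p - 2)))
    (h3 : ∀ s, 1 ≤ s → s ≤ r - 1 →
      ∃ i : ℕ, i ≤ A s ∧ A (s - 1) + i = A s ∧ B (s - 1) = B s / p + i)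
    (h4 : A 0 = 0 ∧ B 0 = 2) :
    ∀ s ≤ r - 1, A s = 0 ∧ B s = 2 * p ^ s := by
  have hp2 := hp.two_le
  have key : ∀ s ≤ r - 1,
      (A s = 0 ∧ B s = 2 * p ^ s) ∨ (0 < A s ∧ A s + B s < 2 * p ^ s) := by
    intro s
    induction s with
    | zero => intro _; left; simpa using h4
    | succ s ih =>
      intro hs
      obtain ⟨a, ha⟩ := h2 (s + 1) (by omega) hs
      obtain ⟨i, -, hA, hB⟩ := h3 (s + 1) (by omega) hs
      rw [Nat.add_sub_cancel] at hA hB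
      have hdiv : B (s + 1) / p = a := by
        rcases ha with ⟨_, h⟩ | ⟨_, h⟩
        · rw [h, Nat.mul_div_cancel_left _ hp.pos]
        · rw [h, Nat.mul_add_div hp.pos, Nat.div_eq_of_lt (by omega), add_zero]
      rw [hdiv] at hB
      have ih' := ih (by omega)
      rw [hB] at ih'
      rw [← hA, pow_succ]
      exact chain_step hp2 ha ih'
  have htop : A (r - 1) = 0 := by
    rcases key (r - 1) le_rfl with h | h <;> omega
  have hzero : ∀ s ≤ r - 1, A s = 0 := by
    intro s hs
    induction hs using Nat.decreasingInduction with
    | self => exact htop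
    | of_succ k hk ih =>
      obtain ⟨i, -, hA, -⟩ := h3 (k + 1) (by omega) hk
      rw [Nat.add_sub_cancel] at hA
      omega
  intro s hs
  have h0 := hzero s hs
  rcases key s hs with h | h
  · exact h
  · omega
end
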